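/- arXiv:1810.12871 — 2 statements merged into one kernel-verified Lean document; each statement's English description precedes it below -/
import Mathlib

section
/- (Nazarov's theorem, specialized to the real DFT basis and the sup norm.) Let n ≥ 1 and let M(n) = (3π/2)β(n)^{−2}. Let p_0, p_1, …, p_{n−1} be nonnegative reals with ∑_{j=0}^{n−1} p_j = 1. Then there exists b ∈ ℝ^n with |b_i| ≤ M(n) for all i = 0,…,n−1 such that |(b, ψ_j)|² ≥ p_j for all j = 0,…,n−1, where (u,v) = (1/n)∑_{i=0}^{n−1} u_i v_i. -/
/-- The real DFT orthonormal basis vectors: with `ω = 2π/n` and `h = ⌈(n-1)/2⌉ = n/2`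
(natural division), `ψ_0(i) = 1`, `ψ_j(i) = √2 cos(ωji)` for `0 < j < h`,
`ψ_h(i) = cos(ωhi)` if `n` even and `√2 cos(ωhi)` if `n` odd, and
`ψ_j(i) = √2 sin(ωji)` for `h < j < n`. -/
noncomputable def psi (n : ℕ) (j i : ℕ) : ℝ :=
  if j = 0 then 1
  else if j < n / 2 then Real.sqrt 2 * Real.cos (2 * Real.pi / n * j * i)
  else if j = n / 2 then
    (if n % 2 = 0 then Real.cos (2 * Real.pi / n * j * i)
     else Real.sqrt 2 * Real.cos (2 * Real.pi / n * j * i))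
  else Real.sqrt 2 * Real.sin (2 * Real.pi / n * j * i)

/-- Normalized ℓ¹ norm `(1/n) ∑_{i<n} |ψ_j(i)|` of the `j`-th real DFT basis vector. -/
noncomputable def l1psi (n j : ℕ) : ℝ := (1 / (n : ℝ)) * ∑ i ∈ Finset.range n, |psi n j i|

/-- `β(n) = min_{0 ≤ j < n} (1/n) ∑_i |ψ_j(i)|`. -/
noncomputable def beta (n : ℕ) : ℝ := sInf {x | ∃ j < n, x = l1psi n j}

/-- Nazarov's constant `M(n) = (3π/2) β(n)⁻²`. -/
noncomputable def Mnaz (n : ℕ) : ℝ := (3 * Real.pi / 2) / (beta n) ^ 2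

open Finset in
lemma expsum (n : ℕ) (hn : 1 ≤ n) (m : ℤ) :
    ∑ i ∈ range n, Complex.exp (((2 * Real.pi / n * m * i : ℝ) : ℂ) * Complex.I)
      = if (n : ℤ) ∣ m then (n : ℂ) else 0 := by
  have hn0 : (n : ℂ) ≠ 0 := by exact_mod_cast (by omega : n ≠ 0)
  set r : ℂ := Complex.exp (2 * Real.pi * Complex.I * (m / n)) with hr
  have h1 : ∀ i ∈ range n, Complex.exp (((2 * Real.pi / n * m * i : ℝ) : ℂ) * Complex.I) = r ^ i := by
    intro i _
    rw [hr, ← Complex.exp_nat_mul]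
    congr 1
    push_cast
    ring
  rw [sum_congr rfl h1]
  have hrn : r ^ n = 1 := by
    rw [hr, ← Complex.exp_nat_mul, Complex.exp_eq_one_iff]
    refine ⟨m, ?_⟩
    field_simp
  have hr1 : r = 1 ↔ (n : ℤ) ∣ m := by
    rw [hr, Complex.exp_eq_one_iff]
    have hpi : (Real.pi : ℂ) ≠ 0 := by exact_mod_cast Real.pi_ne_zero
    constructor
    · rintro ⟨k, hk⟩
      refine ⟨k, ?_⟩
      have h3 : (2 * Real.pi * Complex.I) * ((m : ℂ) / n) = (2 * Real.pi * Complex.I) * k := by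
        rw [hk]; ring
      have h4 := mul_left_cancel₀ Complex.two_pi_I_ne_zero h3
      rw [div_eq_iff hn0] at h4
      have h5 : (m : ℂ) = (n : ℂ) * k := by rw [h4]; ring
      exact_mod_cast h5
    · rintro ⟨k, rfl⟩
      refine ⟨k, ?_⟩
      push_cast
      field_simp
  split_ifs with h
  · rw [hr1.2 h]; simp
  · have h2 : (∑ i ∈ range n, r ^ i) * (r - 1) = 0 := by rw [geom_sum_mul, hrn, sub_self]
    rcases mul_eq_zero.1 h2 with h3 | h3
    · exact h3
    · exact absurd (hr1.1 (sub_eq_zero.1 h3)) h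

open Finset in
lemma cossum (n : ℕ) (hn : 1 ≤ n) (m : ℤ) :
    ∑ i ∈ range n, Real.cos (2 * Real.pi / n * m * i) = if (n : ℤ) ∣ m then (n : ℝ) else 0 := by
  have h := congrArg Complex.re (expsum n hn m)
  rw [Complex.re_sum, sum_congr rfl (fun i _ => Complex.exp_ofReal_mul_I_re _)] at h
  rw [h]; split_ifs <;> simp

open Finset in
lemma sinsum (n : ℕ) (hn : 1 ≤ n) (m : ℤ) :
    ∑ i ∈ range n, Real.sin (2 * Real.pi / n * m * i) = 0 := by
  have h := congrArg Complex.im (expsum n hn m)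
  rw [Complex.im_sum, sum_congr rfl (fun i _ => Complex.exp_ofReal_mul_I_im _)] at h
  rw [h]; split_ifs <;> simp

noncomputable def cc (n j : ℕ) : ℝ := if j = 0 ∨ 2 * j = n then 1 else Real.sqrt 2

lemma psi_cos (n j i : ℕ) (h : j ≤ n / 2) :
    psi n j i = cc n j * Real.cos (2 * Real.pi / n * j * i) := by
  unfold psi cc
  by_cases h0 : j = 0
  · simp [h0]
  · by_cases h1 : j < n / 2
    · have : ¬ (j = 0 ∨ 2 * j = n) := by omega
      rw [if_neg h0, if_pos h1, if_neg this]
    · have h2 : j = n / 2 := by omega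
      by_cases h3 : n % 2 = 0
      · have : (j = 0 ∨ 2 * j = n) := by omega
        rw [if_neg h0, if_neg h1, if_pos h2, if_pos h3, if_pos this, one_mul]
      · have : ¬ (j = 0 ∨ 2 * j = n) := by omega
        rw [if_neg h0, if_neg h1, if_pos h2, if_neg h3, if_neg this]

lemma psi_sin (n j i : ℕ) (h : n / 2 < j) :
    psi n j i = Real.sqrt 2 * Real.sin (2 * Real.pi / n * j * i) := by
  unfold psi
  rw [if_neg (by omega), if_neg (by omega), if_neg (by omega)]

lemma cc_sq (n j : ℕ) : cc n j * cc n j = if j = 0 ∨ 2 * j = n then 1 else 2 := by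
  unfold cc; split_ifs <;> simp

lemma small_dvd (n : ℕ) (m : ℤ) (h : |m| < n) : (n : ℤ) ∣ m ↔ m = 0 := by
  constructor
  · intro hd; exact Int.eq_zero_of_abs_lt_dvd hd h
  · rintro rfl; simp

lemma dvd_mid (n : ℕ) (m : ℤ) (h1 : 0 < m) (h2 : m < 2 * n) : (n : ℤ) ∣ m ↔ m = n := by
  constructor
  · rintro ⟨k, rfl⟩
    have hn : (0 : ℤ) < n := by omega
    have a : 0 < k := by by_contra hh; nlinarith
    have b : k < 2 := by by_contra hh; nlinarith
    have : k = 1 := by omega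
    simp [this]
  · rintro rfl; simp

open Finset in
lemma psi_orth_cs (n : ℕ) (hn : 1 ≤ n) (j k : ℕ) (hj : j ≤ n / 2) (hk : n / 2 < k) :
    ∑ i ∈ range n, psi n j i * psi n k i = 0 := by
  have h : ∀ i ∈ range n, psi n j i * psi n k i
      = cc n j * Real.sqrt 2 / 2 * (Real.sin (2 * Real.pi / n * ((k + j : ℤ) : ℝ) * i)
        + Real.sin (2 * Real.pi / n * ((k - j : ℤ) : ℝ) * i)) := by
    intro i _
    rw [psi_cos n j i hj, psi_sin n k i hk]
    have e1 : 2 * Real.pi / n * ((k + j : ℤ) : ℝ) * i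
      = 2 * Real.pi / n * k * i + 2 * Real.pi / n * j * i := by push_cast; ring
    have e2 : 2 * Real.pi / n * ((k - j : ℤ) : ℝ) * i
      = 2 * Real.pi / n * k * i - 2 * Real.pi / n * j * i := by push_cast; ring
    rw [e1, e2, Real.sin_add, Real.sin_sub]; ring
  rw [sum_congr rfl h, ← mul_sum, sum_add_distrib, sinsum n hn, sinsum n hn]; simp

open Finset in
lemma psi_orth (n : ℕ) (hn : 1 ≤ n) (j k : ℕ) (hj : j < n) (hk : k < n) :
    ∑ i ∈ range n, psi n j i * psi n k i = if j = k then (n : ℝ) else 0 := by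
  rcases le_or_gt j (n / 2) with h1 | h1 <;> rcases le_or_gt k (n / 2) with h2 | h2
  · have h : ∀ i ∈ range n, psi n j i * psi n k i
      = cc n j * cc n k / 2 * (Real.cos (2 * Real.pi / n * ((j + k : ℤ) : ℝ) * i)
        + Real.cos (2 * Real.pi / n * ((j - k : ℤ) : ℝ) * i)) := by
      intro i _
      rw [psi_cos n j i h1, psi_cos n k i h2]
      have e1 : 2 * Real.pi / n * ((j + k : ℤ) : ℝ) * i
        = 2 * Real.pi / n * j * i + 2 * Real.pi / n * k * i := by push_cast; ring
      have e2 : 2 * Real.pi / n * ((j - k : ℤ) : ℝ) * i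
        = 2 * Real.pi / n * j * i - 2 * Real.pi / n * k * i := by push_cast; ring
      rw [e1, e2, Real.cos_add, Real.cos_sub]; ring
    rw [sum_congr rfl h, ← mul_sum, sum_add_distrib, cossum n hn, cossum n hn]
    have d2 : (n : ℤ) ∣ (j - k : ℤ) ↔ j = k := by
      rw [small_dvd n _ (by rw [abs_lt]; omega)]; omega
    have d1 : (n : ℤ) ∣ (j + k : ℤ) ↔ (j = k ∧ (j = 0 ∨ 2 * j = n)) := by
      rcases Nat.eq_zero_or_pos (j + k) with h0 | h0
      · have hj0 : j = 0 := by omega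
        have hk0 : k = 0 := by omega
        simp [hj0, hk0]
      · rw [dvd_mid n _ (by omega) (by omega)]; omega
    simp only [d1, d2]
    by_cases hjk : j = k
    · subst hjk
      simp only [true_and, if_true, cc_sq]
      split_ifs <;> ring
    · simp [hjk]
  · rw [psi_orth_cs n hn j k h1 h2, if_neg (by omega)]
  · rw [sum_congr rfl (fun i _ => mul_comm (psi n j i) (psi n k i)),
      psi_orth_cs n hn k j h2 h1, if_neg (by omega)]
  · have h : ∀ i ∈ range n, psi n j i * psi n k i
      = (Real.cos (2 * Real.pi / n * ((j - k : ℤ) : ℝ) * i)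
        - Real.cos (2 * Real.pi / n * ((j + k : ℤ) : ℝ) * i)) := by
      intro i _
      rw [psi_sin n j i h1, psi_sin n k i h2]
      have e1 : 2 * Real.pi / n * ((j + k : ℤ) : ℝ) * i
        = 2 * Real.pi / n * j * i + 2 * Real.pi / n * k * i := by push_cast; ring
      have e2 : 2 * Real.pi / n * ((j - k : ℤ) : ℝ) * i
        = 2 * Real.pi / n * j * i - 2 * Real.pi / n * k * i := by push_cast; ring
      rw [e1, e2, Real.cos_add, Real.cos_sub]
      have := Real.mul_self_sqrt (show (0 : ℝ) ≤ 2 by norm_num)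
      linear_combination (Real.sin (2 * Real.pi / n * j * i) * Real.sin (2 * Real.pi / n * k * i)) * this
    rw [sum_congr rfl h, sum_sub_distrib, cossum n hn, cossum n hn]
    have d2 : (n : ℤ) ∣ (j - k : ℤ) ↔ j = k := by
      rw [small_dvd n _ (by rw [abs_lt]; omega)]; omega
    have d1 : ¬ (n : ℤ) ∣ (j + k : ℤ) := by
      rw [dvd_mid n _ (by omega) (by omega)]; omega
    simp only [d1, d2]
    simp

lemma psi_orth_fin (n : ℕ) (hn : 1 ≤ n) (j k : Fin n) :
    ∑ i : Fin n, psi n j i * psi n k i = if j = k then (n : ℝ) else 0 := by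
  have := psi_orth n hn j k j.2 k.2
  rw [Finset.sum_range (fun i => psi n j i * psi n k i)] at this
  rw [this]; simp [Fin.ext_iff]

lemma l1_fin (n j : ℕ) : l1psi n j = (1 / (n : ℝ)) * ∑ i : Fin n, |psi n j i| := by
  unfold l1psi; rw [Finset.sum_range]

lemma l1_nonneg (n j : ℕ) : 0 ≤ l1psi n j := by
  unfold l1psi
  exact mul_nonneg (by positivity) (Finset.sum_nonneg fun _ _ => abs_nonneg _)

lemma beta_le (n j : ℕ) (hj : j < n) : beta n ≤ l1psi n j := by
  apply csInf_le
  · exact ⟨0, by rintro x ⟨j, _, rfl⟩; exact l1_nonneg n j⟩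
  · exact ⟨j, hj, rfl⟩

lemma l1_pos (n : ℕ) (j : ℕ) (hj : j < n) : 0 < l1psi n j := by
  rcases (l1_nonneg n j).lt_or_eq with h | h
  · exact h
  exfalso
  have hn : (0 : ℝ) < n := by exact_mod_cast (by omega : 0 < n)
  unfold l1psi at h
  have h0 : ∑ i ∈ Finset.range n, |psi n j i| = 0 := by
    rcases mul_eq_zero.1 h.symm with h | h
    · have : (0 : ℝ) < 1 / n := by positivity
      linarith
    · exact h
  rw [Finset.sum_eq_zero_iff_of_nonneg (fun _ _ => abs_nonneg _)] at h0
  have := psi_orth n (by omega) j j hj hj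
  rw [Finset.sum_eq_zero (fun i hi => by rw [abs_eq_zero.1 (h0 i hi)]; simp)] at this
  rw [if_pos rfl] at this
  linarith

lemma beta_pos (n : ℕ) (hn : 1 ≤ n) : 0 < beta n := by
  have hfin : {x | ∃ j < n, x = l1psi n j}.Finite := by
    refine ((Finset.range n).finite_toSet.image (l1psi n)).subset ?_
    rintro x ⟨j, hj, rfl⟩
    exact ⟨j, by simpa using hj, rfl⟩
  have hne : {x | ∃ j < n, x = l1psi n j}.Nonempty := ⟨l1psi n 0, 0, by omega, rfl⟩
  obtain ⟨j, hj, h⟩ := hne.csInf_mem hfin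
  unfold beta
  rw [h]
  exact l1_pos n j hj

noncomputable def FF (x : ℝ) : ℝ := x * Real.arctan x - Real.log (1 + x ^ 2) / 2

lemma FF_deriv (x : ℝ) : HasDerivAt FF (Real.arctan x) x := by
  have hx : (1 + x ^ 2) ≠ 0 := by positivity
  have h1 := (hasDerivAt_id x).mul (Real.hasDerivAt_arctan x)
  have h2 := (((hasDerivAt_pow 2 x).const_add 1).log hx).div_const 2
  refine HasDerivAt.congr_deriv (f := FF) (h1.sub h2) ?_
  simp
  field_simp
  ring

lemma FF_taylor (x y : ℝ) :
    Real.arctan x * (y - x) + (y - x) ^ 2 / (2 * (1 + x ^ 2 + y ^ 2)) ≤ FF y - FF x := by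
  set d := y - x with hd
  set m : ℝ := 1 / (1 + x ^ 2 + y ^ 2) with hm
  let H : ℝ → ℝ := fun t => FF (x + t * d) - m * d ^ 2 * t ^ 2 / 2
  let H1 : ℝ → ℝ := fun t => d * Real.arctan (x + t * d) - m * d ^ 2 * t
  have hlin : ∀ t : ℝ, HasDerivAt (fun t => x + t * d) d t := by
    intro t
    simpa using ((hasDerivAt_id t).mul_const d).const_add x
  have hH : ∀ t, HasDerivAt H (H1 t) t := by
    intro t
    have a := (FF_deriv (x + t * d)).comp t (hlin t)
    have b := ((hasDerivAt_pow 2 t).const_mul (m * d ^ 2)).div_const 2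
    refine HasDerivAt.congr_deriv (f := H) (a.sub b) ?_
    simp [H1]
    ring
  have hH1 : ∀ t, HasDerivAt H1 (d * (1 / (1 + (x + t * d) ^ 2) * d) - m * d ^ 2) t := by
    intro t
    have a := ((Real.hasDerivAt_arctan (x + t * d)).comp t (hlin t)).const_mul d
    have b := (hasDerivAt_id t).const_mul (m * d ^ 2)
    refine HasDerivAt.congr_deriv (f := H1) (a.sub b) ?_
    simp
  have hmono : MonotoneOn H1 (Set.Icc 0 1) := by
    apply monotoneOn_of_deriv_nonneg (convex_Icc 0 1)
    · exact fun t _ => (hH1 t).continuousAt.continuousWithinAt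
    · exact fun t _ => (hH1 t).differentiableAt.differentiableWithinAt
    · intro t ht
      rw [interior_Icc] at ht
      rw [(hH1 t).deriv]
      have h1 : m ≤ 1 / (1 + (x + t * d) ^ 2) := by
        rw [hm]
        apply one_div_le_one_div_of_le (by positivity)
        have : x + t * d = (1 - t) * x + t * y := by rw [hd]; ring
        rw [this]
        nlinarith [mul_nonneg (mul_nonneg ht.1.le (sub_nonneg.2 ht.2.le)) (sq_nonneg (x - y)),
          mul_nonneg ht.1.le (sq_nonneg x), mul_nonneg (sub_nonneg.2 ht.2.le) (sq_nonneg y)]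
      nlinarith [mul_nonneg (sub_nonneg.2 h1) (sq_nonneg d)]
  obtain ⟨c, hc, hc2⟩ := exists_hasDerivAt_eq_slope H H1 (zero_lt_one)
    (fun t _ => (hH t).continuousAt.continuousWithinAt) (fun t _ => hH t)
  have h3 := hmono (Set.left_mem_Icc.2 zero_le_one) ⟨hc.1.le, hc.2.le⟩ hc.1.le
  rw [hc2] at h3
  have e : x + d = y := by rw [hd]; ring
  simp only [H, H1, zero_mul, one_mul, add_zero, e] at h3
  have e2 : d ^ 2 / (2 * (1 + x ^ 2 + y ^ 2)) = m * d ^ 2 / 2 := by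
    rw [hm]; field_simp
  rw [e2]
  linarith

/-- signs -/
def sg (b : Bool) : ℝ := if b then 1 else -1

lemma sg_sq (b : Bool) : sg b * sg b = 1 := by cases b <;> simp [sg]

lemma sg_not (b : Bool) : sg (!b) = - sg b := by cases b <;> simp [sg]

noncomputable def fs (n : ℕ) (a : Fin n → ℝ) (σ : Fin n → Bool) (i : Fin n) : ℝ :=
  ∑ j : Fin n, sg (σ j) * a j * psi n j i

lemma fs_norm (n : ℕ) (hn : 1 ≤ n) (a : Fin n → ℝ) (ha : ∑ j, a j ^ 2 = 1) (σ : Fin n → Bool) :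
    ∑ i, fs n a σ i ^ 2 = n := by
  have h : ∀ i, fs n a σ i ^ 2 = ∑ j : Fin n, ∑ k : Fin n,
      (sg (σ j) * a j * (sg (σ k) * a k)) * (psi n j i * psi n k i) := by
    intro i
    unfold fs
    rw [sq, Finset.sum_mul_sum]
    refine Finset.sum_congr rfl fun j _ => Finset.sum_congr rfl fun k _ => by ring
  simp_rw [h]
  rw [Finset.sum_comm]
  have h2 : ∀ j : Fin n, ∑ i : Fin n, ∑ k : Fin n,
      (sg (σ j) * a j * (sg (σ k) * a k)) * (psi n j i * psi n k i) = a j ^ 2 * n := by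
    intro j
    rw [Finset.sum_comm]
    simp_rw [← Finset.mul_sum, psi_orth_fin n hn]
    simp
    left
    linear_combination (a j ^ 2) * sg_sq (σ j)
  rw [Finset.sum_congr rfl fun j _ => h2 j, ← Finset.sum_mul, ha, one_mul]

lemma fs_flip (n : ℕ) (a : Fin n → ℝ) (σ : Fin n → Bool) (k i : Fin n) :
    fs n a (Function.update σ k (!σ k)) i = fs n a σ i - 2 * (sg (σ k) * a k) * psi n k i := by
  unfold fs
  rw [← Finset.add_sum_erase _ (fun j : Fin n => sg (Function.update σ k (!σ k) j) * a j * psi n j i) (Finset.mem_univ k),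
    ← Finset.add_sum_erase _ (fun j : Fin n => sg (σ j) * a j * psi n j i) (Finset.mem_univ k)]
  rw [Finset.sum_congr rfl (g := fun j : Fin n => sg (σ j) * a j * psi n j i)
    (fun j hj => by rw [Function.update_of_ne (Finset.ne_of_mem_erase hj)])]
  rw [Function.update_self, sg_not]
  ring

theorem nazarov_coefficient_theorem
    (n : ℕ) (hn : 1 ≤ n) (p : Fin n → ℝ) (hp : ∀ j, 0 ≤ p j)
    (hsum : ∑ j, p j = 1) :
    ∃ b : Fin n → ℝ, (∀ i, |b i| ≤ Mnaz n) ∧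
      ∀ j : Fin n, p j ≤ ((1 / (n : ℝ)) * ∑ i : Fin n, b i * psi n (j : ℕ) (i : ℕ)) ^ 2 := by
  have hn0 : (0 : ℝ) < n := by exact_mod_cast (by omega : 0 < n)
  have hβ := beta_pos n hn
  let a : Fin n → ℝ := fun j => Real.sqrt (p j)
  have ha0 : ∀ j, 0 ≤ a j := fun j => Real.sqrt_nonneg _
  have ha2 : ∀ j, a j ^ 2 = p j := fun j => Real.sq_sqrt (hp j)
  have ha : ∑ j, a j ^ 2 = 1 := by simp_rw [ha2]; exact hsum
  obtain ⟨σ, hσ⟩ := Finite.exists_max (fun σ : Fin n → Bool => ∑ i, FF (fs n a σ i))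
  refine ⟨fun i => 3 / beta n ^ 2 * Real.arctan (fs n a σ i), ?_, ?_⟩
  · intro i
    have h1 : |Real.arctan (fs n a σ i)| ≤ Real.pi / 2 :=
      abs_le.2 ⟨(Real.neg_pi_div_two_lt_arctan _).le, (Real.arctan_lt_pi_div_two _).le⟩
    rw [abs_mul, abs_of_pos (show 0 < 3 / beta n ^ 2 by positivity)]
    calc _ ≤ 3 / beta n ^ 2 * (Real.pi / 2) := by gcongr
      _ = _ := by unfold Mnaz; ring
  · intro k
    rcases (ha0 k).lt_or_eq with hk | hk
    swap
    · rw [← ha2 k, ← hk, zero_pow two_ne_zero]; exact sq_nonneg _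
    set τ := Function.update σ k (!σ k) with hτ
    set s := sg (σ k) with hs
    have hss : s * s = 1 := sg_sq _
    set S := ∑ i : Fin n, Real.arctan (fs n a σ i) * psi n k i with hS
    set W : Fin n → ℝ := fun i => 1 + fs n a σ i ^ 2 + fs n a τ i ^ 2 with hW
    have hWpos : ∀ i, 0 < W i := fun i => by simp only [hW]; positivity
    set Q := ∑ i : Fin n, psi n k i ^ 2 / W i with hQ
    have hWsum : ∑ i, W i = 3 * n := by
      simp only [hW]
      rw [Finset.sum_add_distrib, Finset.sum_add_distrib, fs_norm n hn a ha, fs_norm n hn a ha]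
      simp; ring
    have hT : ∀ i, -2 * s * a k * (Real.arctan (fs n a σ i) * psi n k i)
        + 2 * a k ^ 2 * (psi n k i ^ 2 / W i) ≤ FF (fs n a τ i) - FF (fs n a σ i) := by
      intro i
      refine le_trans (le_of_eq ?_) (FF_taylor (fs n a σ i) (fs n a τ i))
      have e : fs n a τ i - fs n a σ i = -2 * s * a k * psi n k i := by
        rw [hτ, fs_flip]; ring
      rw [e]
      have e3 : (-2 * s * a k * psi n k i) ^ 2 = 4 * a k ^ 2 * psi n k i ^ 2 := by
        linear_combination (4 * a k ^ 2 * psi n k i ^ 2) * hss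
      rw [e3]
      have := (hWpos i).ne'
      change _ = _ + _ / (2 * W i)
      field_simp
      ring
    have hTs := Finset.sum_le_sum (fun i (_ : i ∈ Finset.univ) => hT i)
    rw [Finset.sum_add_distrib, ← Finset.mul_sum, ← Finset.mul_sum, Finset.sum_sub_distrib] at hTs
    have hmax := hσ τ
    have h1 : a k * Q ≤ s * S := by
      have : a k * (a k * Q) ≤ a k * (s * S) := by
        rw [hQ, hS]; nlinarith
      exact le_of_mul_le_mul_left this hk
    have hCS : (∑ i : Fin n, |psi n k i|) ^ 2 ≤ Q * (3 * n) := by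
      rw [← hWsum]
      apply Finset.sum_sq_le_sum_mul_sum_of_sq_le_mul
      · intro i _; have := hWpos i; positivity
      · intro i _; exact (hWpos i).le
      · intro i _
        rw [sq_abs, div_mul_cancel₀ _ (hWpos i).ne']
    have hb : beta n * n ≤ ∑ i : Fin n, |psi n k i| := by
      have := beta_le n k k.2
      rw [l1_fin] at this
      calc _ ≤ (1 / (n : ℝ)) * (∑ i : Fin n, |psi n k i|) * n := by gcongr
        _ = _ := by field_simp
    have hQ2 : beta n ^ 2 * n ≤ 3 * Q := by
      have : (beta n * n) ^ 2 ≤ (∑ i : Fin n, |psi n k i|) ^ 2 := by gcongr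
      have : (beta n ^ 2 * n) * n ≤ (3 * Q) * n := by nlinarith
      exact le_of_mul_le_mul_right this hn0
    have hR : (1 / (n : ℝ)) * ∑ i : Fin n, 3 / beta n ^ 2 * Real.arctan (fs n a σ i) * psi n k i
        = 3 * S / (n * beta n ^ 2) := by
      simp_rw [mul_assoc]
      rw [← Finset.mul_sum, ← hS]
      field_simp
    rw [hR]
    have h5 : a k ≤ s * (3 * S / (n * beta n ^ 2)) := by
      rw [← mul_div_assoc, le_div_iff₀ (by positivity)]
      nlinarith
    calc p k = a k ^ 2 := (ha2 k).symm
      _ ≤ (s * (3 * S / (n * beta n ^ 2))) ^ 2 := by gcongr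
      _ = _ := by rw [mul_pow, sq s, hss, one_mul]
end

section
/- Let n ≥ 2, let a ∈ [0,1]^n, and set ρ = ρ(a). Then ∑_{j=1}^{n−1} |â_j|² ≤ n(⌊nρ⌋ + (nρ − ⌊nρ⌋)²) − n²ρ², and moreover n(⌊nρ⌋ + (nρ − ⌊nρ⌋)²) − n²ρ² ≤ n²ρ(1−ρ). -/
/-- Discrete Fourier transform of a real vector `a ∈ ℝ^n`:
`â_j = ∑_{i=0}^{n-1} a_i e^{-2πi·ij/n}`. -/
noncomputable def dft {n : ℕ} (a : Fin n → ℝ) (j : Fin n) : ℂ :=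
  ∑ i : Fin n, (a i : ℂ) *
    Complex.exp (-(2 * Real.pi * Complex.I * ((i : ℕ) : ℂ) * ((j : ℕ) : ℂ)) / (n : ℂ))

/-- Transmissivity `ρ(a) = (1/n) ∑ i, a i`. -/
noncomputable def transmissivity {n : ℕ} (a : Fin n → ℝ) : ℝ :=
  (1 / (n : ℝ)) * ∑ i : Fin n, a i

/-- LMMSE `m(n,t,W,J,d,a) = ∑_i 1/(1/d_i + γ|â_i|²)` with
`γ = t/(n(W+Jρ(a)))`. -/
noncomputable def lmmse (n : ℕ) (t W J : ℝ) (d : Fin n → ℝ) (a : Fin n → ℝ) : ℝ :=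
  ∑ i : Fin n,
    1 / (1 / d i + (t / (n * (W + J * transmissivity a))) * ‖dft a i‖ ^ 2)

/-- Optimal LMMSE `m*(n,t,W,J,d)`: infimum of the LMMSE over apertures `a ∈ [0,1]^n`. -/
noncomputable def lmmseOpt (n : ℕ) (t W J : ℝ) (d : Fin n → ℝ) : ℝ :=
  sInf {m | ∃ a : Fin n → ℝ, (∀ i, a i ∈ Set.Icc (0 : ℝ) 1) ∧ m = lmmse n t W J d a}

theorem aux_g (S x : ℝ) (hx0 : 0 ≤ x) (hx1 : x ≤ 1) :
    (⌊S⌋ : ℝ) + (S - ⌊S⌋) ^ 2 + x ^ 2 ≤ (⌊S + x⌋ : ℝ) + (S + x - ⌊S + x⌋) ^ 2 := by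
  have h1 := Int.floor_le S
  have h2 := Int.lt_floor_add_one S
  by_cases h : S + x < ⌊S⌋ + 1
  · have : ⌊S + x⌋ = ⌊S⌋ := by
      rw [Int.floor_eq_iff]; constructor <;> linarith
    rw [this]
    nlinarith [mul_nonneg (sub_nonneg.2 h1) hx0]
  · have : ⌊S + x⌋ = ⌊S⌋ + 1 := by
      rw [Int.floor_eq_iff]; push_cast; constructor <;> linarith
    rw [this]
    push_cast
    nlinarith [mul_nonneg (sub_nonneg.2 h2.le) (sub_nonneg.2 hx1)]

theorem aux_sum {ι : Type*} (s : Finset ι) (a : ι → ℝ) (ha : ∀ i, a i ∈ Set.Icc (0 : ℝ) 1) :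
    ∑ i ∈ s, a i ^ 2 ≤ (⌊∑ i ∈ s, a i⌋ : ℝ) + (∑ i ∈ s, a i - ⌊∑ i ∈ s, a i⌋) ^ 2 := by
  classical
  induction s using Finset.induction_on with
  | empty => simp
  | insert i s hi ih =>
    rw [Finset.sum_insert hi, Finset.sum_insert hi, add_comm (a i), add_comm (a i ^ 2)]
    have := aux_g (∑ i ∈ s, a i) (a i) (ha i).1 (ha i).2
    linarith

theorem aux_parseval {n : ℕ} (hn : n ≠ 0) (a : Fin n → ℝ) :
    ∑ j, ‖dft a j‖ ^ 2 = n * ∑ i, a i ^ 2 := by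
  set ζ : ℂ := Complex.exp (2 * Real.pi * Complex.I / n) with hζ
  have hp : IsPrimitiveRoot ζ n := Complex.isPrimitiveRoot_exp n hn
  have hz0 : ζ ≠ 0 := Complex.exp_ne_zero _
  have hcz : (starRingEnd ℂ) ζ = ζ⁻¹ := by
    rw [hζ, ← Complex.exp_conj, ← Complex.exp_neg]
    congr 1
    have h2 : (starRingEnd ℂ) 2 = 2 := Complex.conj_ofNat 2
    simp [h2]
    ring
  have hd : ∀ j, dft a j = ∑ i : Fin n, (a i : ℂ) * (ζ⁻¹ ^ (i : ℕ)) ^ (j : ℕ) := by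
    intro j
    unfold dft
    refine Finset.sum_congr rfl fun i _ => ?_
    rw [hζ, ← Complex.exp_neg, ← Complex.exp_nat_mul, ← Complex.exp_nat_mul]
    congr 2
    ring
  have horth : ∀ i k : Fin n, ∑ j : Fin n, (ζ⁻¹ ^ (i : ℕ) * ζ ^ (k : ℕ)) ^ (j : ℕ)
      = if i = k then (n : ℂ) else 0 := by
    intro i k
    split_ifs with h
    · subst h
      simp [← mul_pow, hz0]
    · rw [Fin.sum_univ_eq_sum_range (fun j => (ζ⁻¹ ^ (i : ℕ) * ζ ^ (k : ℕ)) ^ j) n]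
      have hne : ζ⁻¹ ^ (i : ℕ) * ζ ^ (k : ℕ) ≠ 1 := by
        intro h1
        apply h
        have : ζ ^ (i : ℕ) = ζ ^ (k : ℕ) := by
          rw [inv_pow] at h1
          field_simp at h1
          exact h1.symm
        exact Fin.ext (hp.pow_inj i.2 k.2 this)
      rw [geom_sum_eq hne, mul_pow, ← pow_mul, ← pow_mul, mul_comm (i : ℕ), mul_comm (k : ℕ),
        pow_mul, pow_mul, inv_pow, hp.pow_eq_one]
      simp
  have : ((∑ j, ‖dft a j‖ ^ 2 : ℝ) : ℂ) = ((n * ∑ i, a i ^ 2 : ℝ) : ℂ) := by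
    push_cast
    have h1 : ∀ j, (‖dft a j‖ : ℂ) ^ 2 = ∑ i : Fin n, ∑ k : Fin n,
        (a i : ℂ) * a k * (ζ⁻¹ ^ (i : ℕ) * ζ ^ (k : ℕ)) ^ (j : ℕ) := by
      intro j
      rw [← Complex.mul_conj', hd, map_sum, Finset.sum_mul_sum]
      refine Finset.sum_congr rfl fun i _ => Finset.sum_congr rfl fun k _ => ?_
      simp only [map_mul, map_pow, map_inv₀, hcz, Complex.conj_ofReal, inv_inv, mul_pow]
      ring
    simp_rw [h1]
    rw [Finset.sum_comm, Finset.mul_sum]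
    refine Finset.sum_congr rfl fun i _ => ?_
    rw [Finset.sum_comm]
    simp_rw [← Finset.mul_sum, horth]
    simp
    ring
  exact_mod_cast this

/-- Power bound on the nonzero DFT frequencies of an aperture `a ∈ [0,1]^n`:
`∑_{j≠0} |â_j|² ≤ n(⌊nρ⌋ + (nρ-⌊nρ⌋)²) - n²ρ² ≤ n²ρ(1-ρ)`. -/
theorem dft_power_bound (n : ℕ) (hn : 2 ≤ n) (a : Fin n → ℝ)
    (ha : ∀ i, a i ∈ Set.Icc (0 : ℝ) 1) (ρ : ℝ) (hρ : ρ = transmissivity a) :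
    (∑ j ∈ Finset.univ.erase (⟨0, by omega⟩ : Fin n), ‖dft a j‖ ^ 2 ≤
        (n : ℝ) * ((⌊(n : ℝ) * ρ⌋ : ℝ) + ((n : ℝ) * ρ - (⌊(n : ℝ) * ρ⌋ : ℝ)) ^ 2)
          - (n : ℝ) ^ 2 * ρ ^ 2) ∧
      ((n : ℝ) * ((⌊(n : ℝ) * ρ⌋ : ℝ) + ((n : ℝ) * ρ - (⌊(n : ℝ) * ρ⌋ : ℝ)) ^ 2)
          - (n : ℝ) ^ 2 * ρ ^ 2 ≤ (n : ℝ) ^ 2 * ρ * (1 - ρ)) := by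
  have hn0 : n ≠ 0 := by omega
  have hnR : (n : ℝ) ≠ 0 := by exact_mod_cast hn0
  have hS : (n : ℝ) * ρ = ∑ i, a i := by
    rw [hρ, transmissivity]; field_simp
  have h0 : ‖dft a (⟨0, by omega⟩ : Fin n)‖ ^ 2 = (n : ℝ) ^ 2 * ρ ^ 2 := by
    have : dft a (⟨0, by omega⟩ : Fin n) = (((n : ℝ) * ρ : ℝ) : ℂ) := by
      rw [hS]; simp [dft]
    rw [this, Complex.norm_real, Real.norm_eq_abs, sq_abs, mul_pow]
  have hP := aux_parseval hn0 a
  rw [← Finset.add_sum_erase _ _ (Finset.mem_univ (⟨0, by omega⟩ : Fin n)), h0] at hP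
  have hg := aux_sum Finset.univ a ha
  rw [← hS] at hg
  have hnn : (0 : ℝ) ≤ n := Nat.cast_nonneg n
  constructor
  · have := mul_le_mul_of_nonneg_left hg hnn
    linarith
  · have h1 := Int.floor_le ((n : ℝ) * ρ)
    have h2 := Int.lt_floor_add_one ((n : ℝ) * ρ)
    have h3 : (⌊(n : ℝ) * ρ⌋ : ℝ) + ((n : ℝ) * ρ - (⌊(n : ℝ) * ρ⌋ : ℝ)) ^ 2 ≤ n * ρ := by
      nlinarith
    have := mul_le_mul_of_nonneg_left h3 hnn
    nlinarith
end
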